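/- Let ν ∈ N_d(n), let j ∈ J(ν) be a break point of ν, and let ν^j be the unique maximal element of {η ∈ N_d(n) : η ≼ ν and s_j(η) > s_j(ν)} (which exists). Then s_i(ν^j) = s_i(ν) for every break point i ∈ J(ν) with i ≠ j. (GL_n instance of Lemma 2.2(2).) -/

import Mathlib

/-- The `j`-th partial sum `s_j(ν) = ν_0 + … + ν_{j-1}` of a tuple (0-indexed). -/
def psum (ν : ℕ → ℚ) (j : ℕ) : ℚ := ∑ i ∈ Finset.range j, ν i

/-- `ν` (given by its values on `{0, …, n-1}`) is a Newton point for `GL_n`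
with endpoint `d`: nondecreasing, total sum `d`, and the partial sum at every
break point is an integer. -/
def IsNewton (n : ℕ) (d : ℤ) (ν : ℕ → ℚ) : Prop :=
  (∀ i, i + 1 < n → ν i ≤ ν (i + 1)) ∧
  psum ν n = (d : ℚ) ∧
  ∀ j, 0 < j → j < n → ν (j - 1) < ν j → ∃ m : ℤ, psum ν j = (m : ℚ)

/-- `j` is a break point of `ν` (in `1, …, n-1`; `ν (j-1) < ν j` is `ν_j < ν_{j+1}`
in the 1-based notation of the paper). -/
def IsBreak (n : ℕ) (ν : ℕ → ℚ) (j : ℕ) : Prop := 0 < j ∧ j < n ∧ ν (j - 1) < ν j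

/-- The dominance order: `ν' ≼ ν` iff `s_j(ν') ≥ s_j(ν)` for all `1 ≤ j ≤ n`. -/
def Preceq (n : ℕ) (ν' ν : ℕ → ℚ) : Prop := ∀ j, 1 ≤ j → j ≤ n → psum ν j ≤ psum ν' j


theorem psum_succ' (ν : ℕ → ℚ) (k : ℕ) : psum ν (k+1) = psum ν k + ν k := by
  simp [psum, Finset.sum_range_succ]

theorem psum_upper (ν : ℕ → ℚ) (M : ℚ) (a k : ℕ) (h : a ≤ k)
    (hM : ∀ i, a ≤ i → i < k → ν i ≤ M) : psum ν k - psum ν a ≤ ((k:ℚ) - a) * M := by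
  induction k, h using Nat.le_induction with
  | base => simp
  | succ k hk ih =>
    have h1 := ih (fun i h1 h2 => hM i h1 (by omega))
    have h2 := hM k hk (by omega)
    rw [psum_succ']
    push_cast
    linarith

theorem psum_lower (ν : ℕ → ℚ) (M : ℚ) (a k : ℕ) (h : a ≤ k)
    (hM : ∀ i, a ≤ i → i < k → M ≤ ν i) : ((k:ℚ) - a) * M ≤ psum ν k - psum ν a := by
  induction k, h using Nat.le_induction with
  | base => simp
  | succ k hk ih =>
    have h1 := ih (fun i h1 h2 => hM i h1 (by omega))
    have h2 := hM k hk (by omega)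
    rw [psum_succ']
    push_cast
    linarith

theorem newton_mono (n : ℕ) (ν : ℕ → ℚ) (h : ∀ i, i + 1 < n → ν i ≤ ν (i + 1))
    (i k : ℕ) (hik : i ≤ k) (hk : k < n) : ν i ≤ ν k := by
  induction k, hik using Nat.le_induction with
  | base => exact le_rfl
  | succ k hk' ih => exact (ih (by omega)).trans (h k hk)

/-- Replace `ν` on `[a, b)` by its average there. -/
theorem newton_flatten (n : ℕ) (d : ℤ) (ν : ℕ → ℚ) (hν : IsNewton n d ν)
    (a b j : ℕ) (haj : a < j) (hjb : j < b) (hb : b ≤ n) (hj : IsBreak n ν j)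
    (ha : a = 0 ∨ IsBreak n ν a) (hb' : b = n ∨ IsBreak n ν b) :
    ∃ η : ℕ → ℚ, IsNewton n d η ∧ Preceq n η ν ∧ psum ν j < psum η j ∧
      psum η a = psum ν a ∧ psum η b = psum ν b := by
  obtain ⟨hm, hd, hint⟩ := hν
  have mono := newton_mono n ν hm
  have hab : (0:ℚ) < (b:ℚ) - a := by
    have : (a:ℚ) < b := by exact_mod_cast haj.trans hjb
    linarith
  obtain ⟨c, hc⟩ : ∃ c : ℚ, ((b:ℚ) - a) * c = psum ν b - psum ν a :=
    ⟨(psum ν b - psum ν a) / ((b:ℚ) - a), by field_simp⟩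
  have hac : ν a ≤ c := by
    have := psum_lower ν (ν a) a b (by omega) (fun i h1 h2 => mono a i h1 (by omega))
    rw [← hc] at this
    exact le_of_mul_le_mul_left this hab
  have hcb : c ≤ ν (b-1) := by
    have := psum_upper ν (ν (b-1)) a b (by omega)
      (fun i h1 h2 => mono i (b-1) (by omega) (by omega))
    rw [← hc] at this
    exact le_of_mul_le_mul_left this hab
  obtain ⟨η, hη⟩ : ∃ η : ℕ → ℚ, ∀ k, η k = if a ≤ k ∧ k < b then c else ν k :=
    ⟨_, fun k => rfl⟩
  have e1 : ∀ k, k < a → η k = ν k := fun k h => by rw [hη, if_neg (by omega)]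
  have e2 : ∀ k, a ≤ k → k < b → η k = c := fun k h h' => by rw [hη, if_pos ⟨h, h'⟩]
  have e3 : ∀ k, b ≤ k → η k = ν k := fun k h => by rw [hη, if_neg (by omega)]
  have p1 : ∀ k, k ≤ a → psum η k = psum ν k := fun k h =>
    Finset.sum_congr rfl (fun i hi => e1 i (by have := Finset.mem_range.1 hi; omega))
  have p2 : ∀ k, a ≤ k → k ≤ b → psum η k = psum ν a + ((k:ℚ) - a) * c := by
    intro k h1 h2
    have u := psum_upper η c a k h1 (fun i h3 h4 => (e2 i h3 (by omega)).le)
    have l := psum_lower η c a k h1 (fun i h3 h4 => (e2 i h3 (by omega)).ge)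
    rw [p1 a le_rfl] at u l
    linarith
  have pb : psum η b = psum ν b := by
    rw [p2 b (by omega) le_rfl, hc]; ring
  have p3 : ∀ k, b ≤ k → psum η k = psum ν k := by
    intro k h
    induction k, h using Nat.le_induction with
    | base => exact pb
    | succ k hk ih => rw [psum_succ', psum_succ', ih, e3 k hk]
  have key : ∀ k, a < k → k < b → psum ν k ≤ psum η k ∧
      (ν (k-1) < ν k → psum ν k < psum η k) := by
    intro k h1 h2
    have u := psum_upper ν (ν (k-1)) a k h1.le
      (fun i h3 h4 => mono i (k-1) (by omega) (by omega))
    have l := psum_lower ν (ν k) k b h2.le (fun i h3 h4 => mono k i h3 (by omega))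
    have hk1 : (0:ℚ) < (k:ℚ) - a := by
      have : (a:ℚ) < k := by exact_mod_cast h1
      linarith
    have hk2 : (0:ℚ) < (b:ℚ) - k := by
      have : (k:ℚ) < b := by exact_mod_cast h2
      linarith
    have u' := mul_le_mul_of_nonneg_left u hk2.le
    have l' := mul_le_mul_of_nonneg_left l hk1.le
    have hpos := mul_pos hk1 hk2
    rw [p2 k h1.le h2.le]
    have hid : ((b:ℚ) - a) * (psum ν a + ((k:ℚ) - a) * c - psum ν k)
        = ((k:ℚ) - a) * (psum ν b - psum ν k) - ((b:ℚ) - k) * (psum ν k - psum ν a) := by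
      linear_combination ((k:ℚ) - a) * hc
    constructor
    · have h3 := mul_le_mul_of_nonneg_left (mono (k-1) k (by omega) (by omega)) hpos.le
      have : 0 ≤ ((b:ℚ) - a) * (psum ν a + ((k:ℚ) - a) * c - psum ν k) := by
        rw [hid]; linarith
      have := nonneg_of_mul_nonneg_right this hab
      linarith
    · intro hlt
      have h3 := mul_lt_mul_of_pos_left hlt hpos
      have : 0 < ((b:ℚ) - a) * (psum ν a + ((k:ℚ) - a) * c - psum ν k) := by
        rw [hid]; linarith
      have := pos_of_mul_pos_right this hab.le
      linarith
  refine ⟨η, ⟨?_, ?_, ?_⟩, ?_, (key j haj hjb).2 hj.2.2, p1 a le_rfl, pb⟩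
  · intro i hi
    rcases lt_trichotomy (i+1) a with h | h | h
    · rw [e1 i (by omega), e1 _ h]; exact hm i hi
    · rw [e1 i (by omega), e2 (i+1) (by omega) (by omega)]
      refine (hm i hi).trans ?_
      rw [h]; exact hac
    · rcases lt_trichotomy (i+1) b with h' | h' | h'
      · rw [e2 i (by omega) (by omega), e2 (i+1) (by omega) h']
      · rw [e2 i (by omega) (by omega), e3 (i+1) (by omega)]
        have : b - 1 = i := by omega
        rw [this] at hcb
        exact hcb.trans (hm i hi)
      · rw [e3 i (by omega), e3 (i+1) (by omega)]; exact hm i hi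
  · rw [p3 n hb, hd]
  · intro k h0 hkn hlt
    rcases lt_trichotomy k a with h | h | h
    · rw [e1 _ (by omega), e1 _ h] at hlt
      rw [p1 k h.le]; exact hint k h0 hkn hlt
    · rw [p1 k h.le]
      rcases ha with ha | ha
      · omega
      · rw [h]; exact hint a ha.1 ha.2.1 ha.2.2
    · rcases lt_trichotomy k b with h' | h' | h'
      · rw [e2 (k-1) (by omega) (by omega), e2 k (by omega) h'] at hlt
        exact absurd hlt (lt_irrefl _)
      · rw [p3 k h'.ge]
        rcases hb' with hb' | hb'
        · omega
        · rw [h']; exact hint b hb'.1 hb'.2.1 hb'.2.2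
      · rw [e3 (k-1) (by omega), e3 k h'.le] at hlt
        rw [p3 k h'.le]; exact hint k h0 hkn hlt
  · intro k _ _
    rcases le_or_gt k a with h | h
    · exact (p1 k h).ge
    · rcases lt_or_ge k b with h' | h'
      · exact (key k h h').1
      · exact (p3 k h').ge

/-- GL_n instance of Lemma 2.2(2): if `νj` is the unique maximal element of the set of
Newton points `η ≼ ν` with `s_j(η) > s_j(ν)` (for a break point `j` of `ν`), then
`s_i(νj) = s_i(ν)` for every break point `i ≠ j` of `ν`. -/
theorem newton_max_below_breakpoint_eq_at_other_breaks (n : ℕ) (d : ℤ) (hn : 1 ≤ n)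
    (ν : ℕ → ℚ) (hν : IsNewton n d ν) (j : ℕ) (hj : IsBreak n ν j)
    (νj : ℕ → ℚ) (hνj : IsNewton n d νj) (hprec : Preceq n νj ν)
    (hbrk : psum ν j < psum νj j)
    (hmax : ∀ η : ℕ → ℚ, IsNewton n d η → Preceq n η ν → psum ν j < psum η j →
      Preceq n η νj) :
    ∀ i, IsBreak n ν i → i ≠ j → psum νj i = psum ν i := by
  intro i hi hij
  refine le_antisymm ?_ (hprec i hi.1 hi.2.1.le)
  rcases lt_or_gt_of_ne hij with h | h
  · obtain ⟨η, h1, h2, h3, h4, -⟩ :=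
      newton_flatten n d ν hν i n j h hj.2.1 le_rfl hj (Or.inr hi) (Or.inl rfl)
    exact (hmax η h1 h2 h3 i hi.1 hi.2.1.le).trans h4.le
  · obtain ⟨η, h1, h2, h3, -, h4⟩ :=
      newton_flatten n d ν hν 0 i j hj.1 h hi.2.1.le hj (Or.inl rfl) (Or.inr hi)
    exact (hmax η h1 h2 h3 i hi.1 hi.2.1.le).trans h4.le
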